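/- Let l ≥ 1 and let α be a continuous proper action of the additive group ℝ^l on a Hausdorff topological space M. Let φ : M → ℂ be a continuous function with compact support. Then sup_{p ∈ M} ∫_{ℝ^l} |φ(α_z(p))| dz < ∞, where the integral is with respect to Lebesgue measure on ℝ^l. -/

import Mathlib

open MeasureTheory

/-- For a proper continuous action of `ℝ^l` on a Hausdorff space and a compactly
supported continuous function `φ`, the orbit integrals `∫_{ℝ^l} |φ(α_z(p))| dz`
are uniformly bounded in `p`. -/
theorem orbit_integral_uniformly_bounded
    (l : ℕ) (hl : 1 ≤ l) {M : Type*} [TopologicalSpace M] [T2Space M]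
    (α : (Fin l → ℝ) → M → M)
    (hzero : α 0 = id)
    (hadd : ∀ z w : Fin l → ℝ, α (z + w) = α z ∘ α w)
    (hcont : Continuous fun zp : (Fin l → ℝ) × M => α zp.1 zp.2)
    (hproper : IsProperMap fun zp : (Fin l → ℝ) × M => (zp.2, α zp.1 zp.2))
    (φ : M → ℂ) (hφ : Continuous φ) (hsupp : HasCompactSupport φ) :
    ∃ C : ℝ, ∀ p : M, (∫ z : Fin l → ℝ, ‖φ (α z p)‖) ≤ C := by
  obtain ⟨B, hB⟩ := hφ.bounded_above_of_compact_support hsupp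
  have hK : IsCompact (tsupport φ) := hsupp
  have hpre := hproper.isCompact_preimage (hK.prod hK)
  have hS := hpre.image continuous_fst
  set S : Set (Fin l → ℝ) := Set.image Prod.fst
    (Set.preimage (fun zp : (Fin l → ℝ) × M => (zp.2, α zp.1 zp.2))
      (tsupport φ ×ˢ tsupport φ)) with hSdef
  have key : ∀ p ∈ tsupport φ, (∫ z : Fin l → ℝ, ‖φ (α z p)‖) ≤ B * volume.real S := by
    intro p hp
    have h0 : ∀ z, z ∉ S → ‖φ (α z p)‖ = 0 := by
      intro z hz
      rw [norm_eq_zero]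
      apply image_eq_zero_of_notMem_tsupport
      intro h
      exact hz ⟨(z, p), ⟨hp, h⟩, rfl⟩
    rw [← setIntegral_eq_integral_of_forall_compl_eq_zero h0]
    refine (le_abs_self _).trans ?_
    rw [← Real.norm_eq_abs]
    refine norm_setIntegral_le_of_norm_le_const hS.measure_lt_top ?_
    intro z _
    simpa using hB (α z p)
  refine ⟨max 0 (B * volume.real S), fun p => ?_⟩
  by_cases h : ∃ w, α w p ∈ tsupport φ
  · obtain ⟨w, hw⟩ := h
    refine le_trans ?_ ((key _ hw).trans (le_max_right _ _))
    rw [← integral_add_right_eq_self (fun z => ‖φ (α z p)‖) w]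
    simp [hadd]
  · push Not at h
    have : ∀ z, φ (α z p) = 0 := fun z => image_eq_zero_of_notMem_tsupport (h z)
    simp [this]
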